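/- Let M, L be Lagrangian subspaces of V. For K ∈ ℂ(M\H/L, ψ) and f ∈ ℂ(L\H, ψ), define (K ∗ f)(h) = q^{−(n+1)} Σ_{h'∈H} K(h')·f(h'⁻¹·h). Then K ∗ f ∈ ℂ(M\H, ψ), and the resulting map I : ℂ(M\H/L, ψ) → Hom_H(ℂ(L\H, ψ), ℂ(M\H, ψ)), I[K](f) = K ∗ f, is a linear isomorphism onto the space of H-equivariant linear maps. -/

import Mathlib

open scoped BigOperators
attribute [local instance] Classical.propDecidable

variable {k : Type} [Field k] [Fintype k]
variable {V : Type} [AddCommGroup V] [Module k V] [Fintype V]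

/-- Multiplication of the Heisenberg group `H = V × k`:
`(v,z)·(v',z') = (v + v', z + z' + (1/2) ω(v,v'))`. -/
def hMul (ω : V →ₗ[k] V →ₗ[k] k) (x y : V × k) : V × k :=
  (x.1 + y.1, x.2 + y.2 + (2 : k)⁻¹ * ω x.1 y.1)

/-- Inversion in the Heisenberg group. -/
def hInv (ω : V →ₗ[k] V →ₗ[k] k) (x : V × k) : V × k :=
  (-x.1, -x.2 + (2 : k)⁻¹ * ω x.1 x.1)

/-- Right translation `(π(h)f)(h') = f(h'·h)` of functions on the Heisenberg group. -/
def rt (ω : V →ₗ[k] V →ₗ[k] k) (h : V × k) (f : V × k → ℂ) : V × k → ℂ :=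
  fun x => f (hMul ω x h)

/-- The model `ℂ(L\H, ψ)`: functions `f : H → ℂ` with `f((0,z)·(l,0)·h) = ψ(z)·f(h)`
for `z ∈ k`, `l ∈ L`. -/
noncomputable def model (ω : V →ₗ[k] V →ₗ[k] k) (L : Submodule k V) (ψ : k → ℂ) :
    Submodule ℂ (V × k → ℂ) where
  carrier := {f | ∀ z : k, ∀ l ∈ L, ∀ h : V × k,
    f (hMul ω ((0 : V), z) (hMul ω (l, (0 : k)) h)) = ψ z * f h}
  add_mem' := by
    intro f g hf hg z l hl h
    simp only [Pi.add_apply, hf z l hl h, hg z l hl h]; ring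
  zero_mem' := by intro z l hl h; simp
  smul_mem' := by
    intro c f hf z l hl h
    simp only [Pi.smul_apply, smul_eq_mul, hf z l hl h]; ring

/-- The space `ℂ(M\H/L, ψ)`: functions `K : H → ℂ` with
`K((0,z)·(m,0)·h·(l,0)) = ψ(z)·K(h)` for `z ∈ k`, `m ∈ M`, `l ∈ L`. -/
noncomputable def biModel (ω : V →ₗ[k] V →ₗ[k] k) (M L : Submodule k V) (ψ : k → ℂ) :
    Submodule ℂ (V × k → ℂ) where
  carrier := {f | ∀ z : k, ∀ m ∈ M, ∀ l ∈ L, ∀ h : V × k,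
    f (hMul ω (hMul ω (hMul ω ((0 : V), z) (m, (0 : k))) h) (l, (0 : k))) = ψ z * f h}
  add_mem' := by
    intro f g hf hg z m hm l hl h
    simp only [Pi.add_apply, hf z m hm l hl h, hg z m hm l hl h]; ring
  zero_mem' := by intro z m hm l hl h; simp
  smul_mem' := by
    intro c f hf z m hm l hl h
    simp only [Pi.smul_apply, smul_eq_mul, hf z m hm l hl h]; ring

/-- The averaging operator `F_{M,L}[f](h) = ∑_{m ∈ M} f((m,0)·h)`. -/
noncomputable def avg (ω : V →ₗ[k] V →ₗ[k] k) (M : Submodule k V) :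
    (V × k → ℂ) →ₗ[ℂ] (V × k → ℂ) where
  toFun f := fun h => ∑ m : M, f (hMul ω ((m : V), (0 : k)) h)
  map_add' f g := by funext h; simp [Finset.sum_add_distrib]
  map_smul' c f := by funext h; simp [Finset.mul_sum]

/-- Normalized convolution on the Heisenberg group:
`(K ∗ f)(h) = q^{-(n+1)} ∑_{h' ∈ H} K(h')·f(h'⁻¹·h)`. -/
noncomputable def conv (ω : V →ₗ[k] V →ₗ[k] k) (n : ℕ) (K f : V × k → ℂ) : V × k → ℂ :=
  fun h => ((Fintype.card k : ℂ))⁻¹ ^ (n + 1) * ∑ x : V × k, K x * f (hMul ω (hInv ω x) h)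

/-- The one-dimensional Gauss sum `G(ψ) = ∑_{z ∈ k} ψ(z²/2)`. -/
noncomputable def gaussSum' (ψ : k → ℂ) : ℂ := ∑ z : k, ψ ((2 : k)⁻¹ * z ^ 2)

/-- The normalization coefficient `A_{M°,L°} = (G(ψ)/q)ⁿ · σ((−1)^{n(n−1)/2} ω_∧(o_L,o_M))`,
with the orientations presented by bases and `ω_∧(o_L,o_M) = det (ω(bL i, bM j))_{ij}`,
and `σ` the Legendre (quadratic) character. -/
noncomputable def Acoef (ω : V →ₗ[k] V →ₗ[k] k) (ψ : k → ℂ) (n : ℕ)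
    {M L : Submodule k V} (bM : Module.Basis (Fin n) k M) (bL : Module.Basis (Fin n) k L) : ℂ :=
  (gaussSum' ψ / (Fintype.card k : ℂ)) ^ n *
    ((quadraticChar k ((-1 : k) ^ (n * (n - 1) / 2) *
      (Matrix.of fun i j => ω ((bL i : V)) ((bM j : V))).det) : ℤ) : ℂ)

/-- The symplectic group `Sp(V)` of linear automorphisms of `V` preserving `ω`. -/
def Sp (ω : V →ₗ[k] V →ₗ[k] k) : Subgroup (V ≃ₗ[k] V) where
  carrier := {g | ∀ u v : V, ω (g u) (g v) = ω u v}
  one_mem' := by intro u v; rfl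
  mul_mem' := by
    intro a b ha hb u v
    have h : ∀ x : V, (a * b) x = a (b x) := fun x => rfl
    rw [h, h, ha, hb]
  inv_mem' := by
    intro a ha u v
    have h1 : a (a⁻¹ u) = u := a.apply_symm_apply u
    have h2 : a (a⁻¹ v) = v := a.apply_symm_apply v
    have := ha (a⁻¹ u) (a⁻¹ v)
    rw [h1, h2] at this
    exact this.symm

/-- A nontrivial (nowhere-vanishing) additive character `ψ : k → ℂ*`. -/
def IsAddChar (ψ : k → ℂ) : Prop :=
  (∀ a b : k, ψ (a + b) = ψ a * ψ b) ∧ (∀ a : k, ψ a ≠ 0) ∧ (∃ a : k, ψ a ≠ 1)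

/-- `π` is a Heisenberg representation on `ℋ` with central character `ψ`:
a representation of `H = V × k` by linear maps, with the center acting by `ψ`,
which is irreducible. -/
def IsHeisenbergRep (ω : V →ₗ[k] V →ₗ[k] k) (ψ : k → ℂ)
    {ℋ : Type} [AddCommGroup ℋ] [Module ℂ ℋ] (π : V × k → (ℋ →ₗ[ℂ] ℋ)) : Prop :=
  π ((0 : V), (0 : k)) = LinearMap.id ∧
  (∀ x y : V × k, π (hMul ω x y) = (π x).comp (π y)) ∧
  (∀ z : k, π ((0 : V), z) = ψ z • LinearMap.id) ∧
  (∀ W : Submodule ℂ ℋ, (∀ x : V × k, ∀ w ∈ W, π x w ∈ W) → W = ⊥ ∨ W = ⊤)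

/-- The action `g_*` of a symplectic automorphism on functions on `H`, `(g_* f)(h) = f(g⁻¹·h)`. -/
def gstar (g : V ≃ₗ[k] V) (f : V × k → ℂ) : V × k → ℂ :=
  fun x => f (g.symm x.1, x.2)


section aux

set_option linter.unusedSectionVars false

theorem aux_assoc (ω : V →ₗ[k] V →ₗ[k] k) (x y z : V × k) :
    hMul ω (hMul ω x y) z = hMul ω x (hMul ω y z) := by
  ext
  · simp [hMul, add_assoc]
  · simp [hMul]; ring

theorem aux_inv_mul (ω : V →ₗ[k] V →ₗ[k] k) (x : V × k) :
    hMul ω (hInv ω x) x = (0, 0) := by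
  ext
  · simp [hMul, hInv]
  · simp [hMul, hInv]

theorem aux_mul_inv (ω : V →ₗ[k] V →ₗ[k] k) (x : V × k) :
    hMul ω x (hInv ω x) = (0, 0) := by
  ext
  · simp [hMul, hInv]
  · simp [hMul, hInv]

theorem aux_one_mul (ω : V →ₗ[k] V →ₗ[k] k) (x : V × k) : hMul ω (0, 0) x = x := by
  ext <;> simp [hMul]

theorem aux_mul_one (ω : V →ₗ[k] V →ₗ[k] k) (x : V × k) : hMul ω x (0, 0) = x := by
  ext <;> simp [hMul]

theorem aux_inv_mul_cancel (ω : V →ₗ[k] V →ₗ[k] k) (x y : V × k) :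
    hMul ω (hInv ω x) (hMul ω x y) = y := by
  rw [← aux_assoc, aux_inv_mul, aux_one_mul]

theorem aux_mul_inv_cancel (ω : V →ₗ[k] V →ₗ[k] k) (x y : V × k) :
    hMul ω x (hMul ω (hInv ω x) y) = y := by
  rw [← aux_assoc, aux_mul_inv, aux_one_mul]

theorem aux_cancel_left (ω : V →ₗ[k] V →ₗ[k] k) {x y z : V × k}
    (h : hMul ω x y = hMul ω x z) : y = z := by
  rw [← aux_inv_mul_cancel ω x y, h, aux_inv_mul_cancel]

theorem aux_inv_inv (ω : V →ₗ[k] V →ₗ[k] k) (x : V × k) : hInv ω (hInv ω x) = x := by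
  apply aux_cancel_left ω (x := hInv ω x)
  rw [aux_mul_inv, aux_inv_mul]

theorem aux_inv_rev (ω : V →ₗ[k] V →ₗ[k] k) (x y : V × k) :
    hInv ω (hMul ω x y) = hMul ω (hInv ω y) (hInv ω x) := by
  apply aux_cancel_left ω (x := hMul ω x y)
  rw [aux_mul_inv, aux_assoc, aux_mul_inv_cancel, aux_mul_inv]

/-- left translation as a permutation -/
def auxL (ω : V →ₗ[k] V →ₗ[k] k) (a : V × k) : V × k ≃ V × k where
  toFun x := hMul ω a x
  invFun x := hMul ω (hInv ω a) x
  left_inv x := aux_inv_mul_cancel ω a x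
  right_inv x := aux_mul_inv_cancel ω a x

/-- inversion as a permutation -/
def auxI (ω : V →ₗ[k] V →ₗ[k] k) : V × k ≃ V × k where
  toFun x := hInv ω x
  invFun x := hInv ω x
  left_inv x := aux_inv_inv ω x
  right_inv x := aux_inv_inv ω x

theorem aux_sum_left (ω : V →ₗ[k] V →ₗ[k] k) (a : V × k) (F : V × k → ℂ) :
    ∑ x, F (hMul ω a x) = ∑ x, F x := Equiv.sum_comp (auxL ω a) F

theorem aux_sum_inv (ω : V →ₗ[k] V →ₗ[k] k) (F : V × k → ℂ) :
    ∑ x, F (hInv ω x) = ∑ x, F x := Equiv.sum_comp (auxI ω) F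

theorem aux_center (ω : V →ₗ[k] V →ₗ[k] k) (l : V) (z : k) :
    hMul ω (0, z) (l, 0) = (l, z) := by
  ext <;> simp [hMul]

theorem aux_mem_model (ω : V →ₗ[k] V →ₗ[k] k) (L : Submodule k V) (ψ : k → ℂ)
    (f : V × k → ℂ) : f ∈ model ω L ψ ↔
      ∀ z : k, ∀ l ∈ L, ∀ h, f (hMul ω (l, z) h) = ψ z * f h := by
  change (∀ z : k, ∀ l ∈ L, ∀ h : V × k,
    f (hMul ω ((0 : V), z) (hMul ω (l, (0 : k)) h)) = ψ z * f h) ↔ _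
  simp only [← aux_assoc, aux_center]

theorem aux_mem_biModel (ω : V →ₗ[k] V →ₗ[k] k) (M L : Submodule k V) (ψ : k → ℂ)
    (f : V × k → ℂ) : f ∈ biModel ω M L ψ ↔
      ∀ z : k, ∀ m ∈ M, ∀ l ∈ L, ∀ h,
        f (hMul ω (hMul ω (m, z) h) (l, 0)) = ψ z * f h := by
  change (∀ z : k, ∀ m ∈ M, ∀ l ∈ L, ∀ h : V × k,
    f (hMul ω (hMul ω (hMul ω ((0 : V), z) (m, (0 : k))) h) (l, (0 : k))) = ψ z * f h) ↔ _
  simp only [aux_center]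

/-- the basic function supported on `L × k` -/
noncomputable def auxD (L : Submodule k V) (ψ : k → ℂ) : V × k → ℂ :=
  fun x => if x.1 ∈ L then ψ x.2 else 0

theorem aux_psi_zero {ψ : k → ℂ} (hψ : IsAddChar ψ) : ψ 0 = 1 := by
  have h := hψ.1 0 0
  rw [add_zero] at h
  exact mul_left_cancel₀ (hψ.2.1 0) (by rw [← h, mul_one])

theorem aux_psi_neg {ψ : k → ℂ} (hψ : IsAddChar ψ) (z : k) : ψ z * ψ (-z) = 1 := by
  rw [← hψ.1, add_neg_cancel, aux_psi_zero hψ]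

theorem auxD_mem (ω : V →ₗ[k] V →ₗ[k] k) (L : Submodule k V) (ψ : k → ℂ) (hψ : IsAddChar ψ)
    (hLiso : ∀ x ∈ L, ∀ y ∈ L, ω x y = 0) : auxD L ψ ∈ model ω L ψ := by
  rw [aux_mem_model]
  intro z l hl h
  by_cases hh : h.1 ∈ L
  · simp [auxD, hMul, hh, L.add_mem hl hh, hLiso l hl _ hh, hψ.1]
  · have : l + h.1 ∉ L := fun h' => hh (by simpa using L.sub_mem h' hl)
    simp [auxD, hMul, hh, this]

theorem auxD_rt (ω : V →ₗ[k] V →ₗ[k] k) (L : Submodule k V) (ψ : k → ℂ)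
    (hLiso : ∀ x ∈ L, ∀ y ∈ L, ω x y = 0) (l : V) (hl : l ∈ L) :
    rt ω (l, 0) (auxD L ψ) = auxD L ψ := by
  funext h
  by_cases hh : h.1 ∈ L
  · simp [rt, auxD, hMul, hh, L.add_mem hh hl, hLiso _ hh l hl]
  · have : h.1 + l ∉ L := fun h' => hh (by simpa using L.sub_mem h' hl)
    simp [rt, auxD, hMul, hh, this]

theorem aux_sum_const (L : Submodule k V) (n : ℕ) (hLrank : Module.finrank k L = n) (c : ℂ) :
    ((Fintype.card k : ℂ))⁻¹ ^ (n + 1) * ∑ x : V × k, (if x.1 ∈ L then c else 0) = c := by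
  have hcard : Fintype.card L = Fintype.card k ^ n := by
    rw [Module.card_eq_pow_finrank (K := k), hLrank]
  have h1 : ∑ x : V × k, (if x.1 ∈ L then c else 0)
      = (Fintype.card k : ℂ) ^ (n + 1) * c := by
    have h2 : ∑ x : V × k, (if x.1 ∈ L then c else 0)
        = ∑ v : V, ∑ _z : k, (if v ∈ L then c else 0) := Fintype.sum_prod_type _
    rw [h2]
    simp only [Finset.sum_const, Finset.card_univ, nsmul_eq_mul]
    rw [← Finset.mul_sum, ← Finset.sum_filter, Finset.sum_const, nsmul_eq_mul,
      ← Fintype.card_subtype]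
    have : Fintype.card {x // x ∈ L} = Fintype.card k ^ n := by
      rw [← hcard]
    rw [this]
    push_cast
    ring
  have h0 : (Fintype.card k : ℂ) ≠ 0 := by
    exact_mod_cast Fintype.card_ne_zero
  rw [h1, ← mul_assoc, ← mul_pow, inv_mul_cancel₀ h0, one_pow, one_mul]

/-- `K * δ = K`. -/
theorem aux_conv_D (ω : V →ₗ[k] V →ₗ[k] k) (n : ℕ) (halt : ∀ v : V, ω v v = 0)
    (ψ : k → ℂ) (hψ : IsAddChar ψ) (M L : Submodule k V)
    (hLrank : Module.finrank k L = n) (K : V × k → ℂ) (hK : K ∈ biModel ω M L ψ) :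
    conv ω n K (auxD L ψ) = K := by
  rw [aux_mem_biModel] at hK
  funext h
  unfold conv
  rw [← aux_sum_left ω h, ← aux_sum_inv ω]
  conv_rhs => rw [← aux_sum_const L n hLrank (K h)]
  congr 1
  refine Finset.sum_congr rfl fun x _ => ?_
  rw [aux_inv_rev, aux_inv_inv, aux_assoc, aux_inv_mul, aux_mul_one]
  unfold auxD
  split_ifs with hx
  · have := hK (-x.2) 0 M.zero_mem (-x.1) (L.neg_mem hx) h
    have e : hMul ω (hMul ω (0, -x.2) h) (-x.1, 0) = hMul ω h (hInv ω x) := by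
      ext
      · simp [hMul, hInv]
      · simp [hMul, hInv, halt]; ring
    rw [e] at this
    rw [this]
    linear_combination (K h) * aux_psi_neg hψ x.2
  · simp

/-- `δ * f = f` -/
theorem aux_D_conv (ω : V →ₗ[k] V →ₗ[k] k) (n : ℕ) (halt : ∀ v : V, ω v v = 0)
    (ψ : k → ℂ) (hψ : IsAddChar ψ) (L : Submodule k V)
    (hLrank : Module.finrank k L = n) (f : V × k → ℂ) (hf : f ∈ model ω L ψ) :
    conv ω n (auxD L ψ) f = f := by
  rw [aux_mem_model] at hf
  funext h
  unfold conv
  conv_rhs => rw [← aux_sum_const L n hLrank (f h)]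
  congr 1
  refine Finset.sum_congr rfl fun x _ => ?_
  unfold auxD
  split_ifs with hx
  · have := hf (-x.2) (-x.1) (L.neg_mem hx) h
    have e : hInv ω x = (-x.1, -x.2) := by
      simp [hInv, halt]
    rw [e, this]
    linear_combination (f h) * aux_psi_neg hψ x.2
  · simp

/-- Convolution as a combination of right translates of the kernel. -/
theorem aux_conv_eq (ω : V →ₗ[k] V →ₗ[k] k) (n : ℕ) (K f : V × k → ℂ) :
    conv ω n K f = ((Fintype.card k : ℂ))⁻¹ ^ (n + 1) •
      ∑ x : V × k, f x • rt ω (hInv ω x) K := by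
  funext h
  simp only [conv, Pi.smul_apply, Finset.sum_apply, smul_eq_mul, rt]
  congr 1
  rw [← aux_sum_left ω h, ← aux_sum_inv ω]
  refine Finset.sum_congr rfl fun x _ => ?_
  rw [aux_inv_rev, aux_inv_inv, aux_assoc, aux_inv_mul, aux_mul_one, mul_comm]

end aux

/-- the kernel transform `I[K](f) = K ∗ f` is a linear isomorphism from
`ℂ(M\\H/L, ψ)` onto the space of `H`-equivariant linear maps `ℂ(L\\H,ψ) → ℂ(M\\H,ψ)`. -/
theorem kernel_transform
    (ω : V →ₗ[k] V →ₗ[k] k) (n : ℕ)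
    (hchar : ringChar k ≠ 2)
    (hdim : Module.finrank k V = 2 * n)
    (halt : ∀ v : V, ω v v = 0)
    (hnd : ∀ v : V, (∀ u : V, ω v u = 0) → v = 0)
    (ψ : k → ℂ) (hψ : IsAddChar ψ)
    (M L : Submodule k V)
    (hMiso : ∀ x ∈ M, ∀ y ∈ M, ω x y = 0) (hMrank : Module.finrank k M = n)
    (hLiso : ∀ x ∈ L, ∀ y ∈ L, ω x y = 0) (hLrank : Module.finrank k L = n) :
    (∀ K ∈ biModel ω M L ψ, ∀ f ∈ model ω L ψ, conv ω n K f ∈ model ω M ψ) ∧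
    (∀ K K' f : V × k → ℂ, conv ω n (K + K') f = conv ω n K f + conv ω n K' f) ∧
    (∀ (c : ℂ) (K f : V × k → ℂ), conv ω n (c • K) f = c • conv ω n K f) ∧
    (∀ K ∈ biModel ω M L ψ, ∀ f ∈ model ω L ψ, ∀ h : V × k,
        conv ω n K (rt ω h f) = rt ω h (conv ω n K f)) ∧
    (∀ K ∈ biModel ω M L ψ, ∀ K' ∈ biModel ω M L ψ,
        (∀ f ∈ model ω L ψ, conv ω n K f = conv ω n K' f) → K = K') ∧
    (∀ T : (V × k → ℂ) →ₗ[ℂ] (V × k → ℂ),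
        (∀ f ∈ model ω L ψ, T f ∈ model ω M ψ) →
        (∀ f ∈ model ω L ψ, ∀ h : V × k, T (rt ω h f) = rt ω h (T f)) →
        ∃ K ∈ biModel ω M L ψ, ∀ f ∈ model ω L ψ, conv ω n K f = T f) := by
  refine ⟨?_, ?_, ?_, ?_, ?_, ?_⟩
  · intro K hK f hf
    rw [aux_mem_biModel] at hK
    rw [aux_mem_model]
    intro z m hm h
    unfold conv
    rw [← aux_sum_left ω (m, z), mul_left_comm]
    congr 1
    rw [Finset.mul_sum]
    refine Finset.sum_congr rfl fun x _ => ?_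
    have := hK z m hm 0 L.zero_mem x
    rw [aux_mul_one] at this
    rw [this, aux_inv_rev, aux_assoc, aux_inv_mul_cancel]
    ring
  · intro K K' f
    funext h
    simp only [conv, Pi.add_apply, add_mul, Finset.sum_add_distrib, mul_add]
  · intro c K f
    funext h
    simp only [conv, Pi.smul_apply, smul_eq_mul, mul_assoc, ← Finset.mul_sum]
    ring
  · intro K _ f _ h
    funext y
    simp only [conv, rt, aux_assoc]
  · intro K hK K' hK' hh
    have := hh _ (auxD_mem ω L ψ hψ hLiso)
    rwa [aux_conv_D ω n halt ψ hψ M L hLrank K hK,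
      aux_conv_D ω n halt ψ hψ M L hLrank K' hK'] at this
  · intro T hT hTe
    have hD := auxD_mem ω L ψ hψ hLiso
    refine ⟨T (auxD L ψ), ?_, ?_⟩
    · have hm := hT _ hD
      rw [aux_mem_model] at hm
      rw [aux_mem_biModel]
      intro z m hmm l hl h
      have h1 := hTe _ hD (l, 0)
      rw [auxD_rt ω L ψ hLiso l hl] at h1
      have h2 := congrFun h1 (hMul ω (m, z) h)
      simp only [rt] at h2
      rw [← h2, hm z m hmm h]
    · intro f hf
      have h3 := aux_D_conv ω n halt ψ hψ L hLrank f hf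
      conv_rhs => rw [← h3]
      rw [aux_conv_eq, aux_conv_eq, map_smul, map_sum]
      simp only [map_smul, hTe _ hD]
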